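/- arXiv:2105.07254 — 2 statements merged into one kernel-verified Lean document; each statement's English description precedes it below -/
import Mathlib

section
/- Let 𝔤 be a finite-dimensional Lie algebra over a field of characteristic zero and 𝔤₀ ⊆ 𝔤 a Lie subalgebra such that the pair (𝔤,𝔤₀) is effective. Then the Weisfeiler filtration reaches zero, i.e., there exists an integer r ≥ 0 such that 𝔤_r = 0. -/
/-- One step of the Weisfeiler filtration: `{x ∈ S | ∀ y, ⁅x, y⁆ ∈ S}`. -/
def weisfeilerStep {K L : Type*} [Field K] [LieRing L] [LieAlgebra K L]
    (S : Submodule K L) : Submodule K L where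
  carrier := {x | x ∈ S ∧ ∀ y : L, ⁅x, y⁆ ∈ S}
  add_mem' := fun ha hb => ⟨S.add_mem ha.1 hb.1, fun y => by
    rw [add_lie]; exact S.add_mem (ha.2 y) (hb.2 y)⟩
  zero_mem' := ⟨S.zero_mem, fun y => by rw [zero_lie]; exact S.zero_mem⟩
  smul_mem' := fun c x hx => ⟨S.smul_mem c hx.1, fun y => by
    rw [smul_lie]; exact S.smul_mem c (hx.2 y)⟩

/-- The Weisfeiler filtration of the pair `(L, g₀)`:
`W 0 = g₀` and `W (k+1) = {x ∈ W k | ∀ y : L, ⁅x, y⁆ ∈ W k}`. -/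
def weisfeiler {K L : Type*} [Field K] [LieRing L] [LieAlgebra K L]
    (g₀ : LieSubalgebra K L) : ℕ → Submodule K L
  | 0 => g₀.toSubmodule
  | (k + 1) => weisfeilerStep (weisfeiler g₀ k)

/-- The pair `(L, g₀)` is effective: the only ideal of `L` contained in `g₀` is zero. -/
def IsEffectivePair {K L : Type*} [Field K] [LieRing L] [LieAlgebra K L]
    (g₀ : LieSubalgebra K L) : Prop :=
  ∀ I : LieIdeal K L, (I : Submodule K L) ≤ g₀.toSubmodule → I = ⊥

/-! The filtration descends inside the finite-dimensional space `g₀`, so it becomes stationary.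
A term with `W r = W (r + 1)` is stable under bracketing with the whole Lie algebra, hence is an
ideal contained in `g₀`, and effectiveness forces it to vanish. -/

section StationaryChain

variable {R M : Type*} [Semiring R] [AddCommMonoid M] [Module R M]

theorem exists_forall_ge_eq_of_antitone_of_isArtinian {f : ℕ → Submodule R M} (hf : Antitone f)
    [IsArtinian R (f 0)] : ∃ n, ∀ m, n ≤ m → f n = f m := by
  have comap_antitone : Antitone fun n ↦ (f n).comap (f 0).subtype :=
    fun _ _ hnm ↦ Submodule.comap_mono (hf hnm)
  have map_comap (n : ℕ) : ((f n).comap (f 0).subtype).map (f 0).subtype = f n := by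
    rw [Submodule.map_comap_subtype, inf_eq_right]
    exact hf n.zero_le
  obtain ⟨n, hn⟩ := WellFoundedLT.antitone_chain_condition comap_antitone
  refine ⟨n, fun m hnm ↦ ?_⟩
  rw [← map_comap n, ← map_comap m]
  exact congrArg _ (hn m hnm)

end StationaryChain

section Weisfeiler

variable {K L : Type*} [Field K] [LieRing L] [LieAlgebra K L]

theorem weisfeilerStep_le (S : Submodule K L) : weisfeilerStep S ≤ S :=
  fun _ hx ↦ hx.1

theorem le_weisfeilerStep_iff_exists_lieIdeal {S : Submodule K L} :
    S ≤ weisfeilerStep S ↔ ∃ I : LieIdeal K L, I.toSubmodule = S := by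
  rw [Submodule.exists_lieSubmodule_coe_eq_iff]
  constructor
  · intro hS y x hx
    rw [← lie_skew]
    exact S.neg_mem ((hS hx).2 y)
  · intro hS x hx
    refine ⟨hx, fun y ↦ ?_⟩
    rw [← lie_skew]
    exact S.neg_mem (hS y x hx)

theorem weisfeiler_antitone (g₀ : LieSubalgebra K L) : Antitone (weisfeiler g₀) :=
  antitone_nat_of_succ_le fun n ↦ weisfeilerStep_le (weisfeiler g₀ n)

theorem exists_lieIdeal_eq_weisfeiler (g₀ : LieSubalgebra K L) [IsArtinian K g₀] :
    ∃ (r : ℕ) (I : LieIdeal K L), I.toSubmodule = weisfeiler g₀ r := by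
  have : IsArtinian K (weisfeiler g₀ 0) := ‹IsArtinian K g₀›
  obtain ⟨r, hr⟩ := exists_forall_ge_eq_of_antitone_of_isArtinian (weisfeiler_antitone g₀)
  have stationary : weisfeiler g₀ r = weisfeilerStep (weisfeiler g₀ r) := hr (r + 1) r.le_succ
  exact ⟨r, le_weisfeilerStep_iff_exists_lieIdeal.mp stationary.le⟩

theorem weisfeiler_eventually_bot_general (g₀ : LieSubalgebra K L) [Module.Finite K g₀]
    (heff : IsEffectivePair g₀) : ∃ r : ℕ, weisfeiler g₀ r = ⊥ := by
  obtain ⟨r, I, hI⟩ := exists_lieIdeal_eq_weisfeiler g₀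
  have I_le : I.toSubmodule ≤ g₀.toSubmodule :=
    hI.trans_le (weisfeiler_antitone g₀ r.zero_le)
  exact ⟨r, hI.symm.trans ((LieSubmodule.toSubmodule_eq_bot I).mpr (heff I I_le))⟩

end Weisfeiler

/-- If the pair `(𝔤, 𝔤₀)` is effective, the Weisfeiler filtration reaches zero. -/
theorem weisfeiler_eventually_bot
    {K : Type*} [Field K] [CharZero K]
    {L : Type*} [LieRing L] [LieAlgebra K L] [Module.Finite K L]
    (g₀ : LieSubalgebra K L) (heff : IsEffectivePair g₀) :
    ∃ r : ℕ, weisfeiler g₀ r = ⊥ :=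
  weisfeiler_eventually_bot_general g₀ heff
end

section
/- Let 𝔤 be a finite-dimensional Lie algebra over a field of characteristic zero and 𝔤₀ ⊆ 𝔤 a Lie subalgebra, with Weisfeiler filtration (𝔤_k). Then for all integers i, j ≥ 0 one has [𝔤_i, 𝔤_j] ⊆ 𝔤_{i+j}. In particular, each 𝔤_i is an ideal of the Lie algebra 𝔤₀. -/
/-! By the Jacobi identity `⁅⁅x, y⁆, z⁆ = ⁅x, ⁅y, z⁆⁆ - ⁅y, ⁅x, z⁆⁆`. For `x ∈ 𝔤_{i+1}` and
`y ∈ 𝔤_{j+1}` we have `⁅x, z⁆ ∈ 𝔤_i` and `⁅y, z⁆ ∈ 𝔤_j`, so both terms on the right lie in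
`𝔤_{i+j+1}` by the cases `(i + 1, j)` and `(i, j + 1)`. Hence `⁅x, y⁆ ∈ 𝔤_{i+j+2}`, and a double
induction reduces the claim to the cases where one index is `0`. -/

section

variable {K L : Type*} [Field K] [LieRing L] [LieAlgebra K L]

theorem mem_weisfeilerStep {S : Submodule K L} {x : L} :
    x ∈ weisfeilerStep S ↔ x ∈ S ∧ ∀ y : L, ⁅x, y⁆ ∈ S :=
  Iff.rfl

theorem lie_mem_of_mem_weisfeilerStep {S : Submodule K L} {x : L} (hx : x ∈ weisfeilerStep S)
    (y : L) : ⁅x, y⁆ ∈ S :=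
  (mem_weisfeilerStep.1 hx).2 y

theorem lie_mem_weisfeilerStep {S : Submodule K L} {x y : L} (hxy : ⁅x, y⁆ ∈ S)
    (hx : ∀ z : L, ⁅x, ⁅y, z⁆⁆ ∈ S) (hy : ∀ z : L, ⁅y, ⁅x, z⁆⁆ ∈ S) :
    ⁅x, y⁆ ∈ weisfeilerStep S := by
  refine mem_weisfeilerStep.2 ⟨hxy, fun z => ?_⟩
  rw [lie_lie]
  exact S.sub_mem (hx z) (hy z)

theorem weisfeiler_le (g₀ : LieSubalgebra K L) (k : ℕ) : weisfeiler g₀ k ≤ g₀.toSubmodule :=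
  weisfeiler_antitone g₀ (Nat.zero_le k)

theorem lie_mem_weisfeiler (g₀ : LieSubalgebra K L) (k : ℕ) {x y : L} (hx : x ∈ g₀)
    (hy : y ∈ weisfeiler g₀ k) : ⁅x, y⁆ ∈ weisfeiler g₀ k := by
  induction k generalizing y with
  | zero => exact g₀.lie_mem hx hy
  | succ k ih =>
    exact lie_mem_weisfeilerStep (ih (weisfeilerStep_le _ hy))
      (fun z => ih (lie_mem_of_mem_weisfeilerStep hy z))
      (fun z => lie_mem_of_mem_weisfeilerStep hy ⁅x, z⁆)

theorem lie_mem_weisfeiler_add (g₀ : LieSubalgebra K L) (i j : ℕ) {x y : L}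
    (hx : x ∈ weisfeiler g₀ i) (hy : y ∈ weisfeiler g₀ j) : ⁅x, y⁆ ∈ weisfeiler g₀ (i + j) := by
  induction i generalizing j x y with
  | zero =>
    rw [Nat.zero_add]
    exact lie_mem_weisfeiler g₀ j hx hy
  | succ i ih_i =>
    induction j generalizing y with
    | zero =>
      rw [← lie_skew]
      exact neg_mem (lie_mem_weisfeiler g₀ (i + 1) hy hx)
    | succ j ih_j =>
      refine lie_mem_weisfeilerStep (ih_j (weisfeilerStep_le _ hy))
        (fun z => ih_j (lie_mem_of_mem_weisfeilerStep hy z)) fun z => ?_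
      have hxzy : ⁅⁅x, z⁆, y⁆ ∈ weisfeiler g₀ (i + 1 + j) := by
        rw [Nat.add_right_comm]
        exact ih_i (j + 1) (lie_mem_of_mem_weisfeilerStep hx z) hy
      rw [← lie_skew]
      exact neg_mem hxzy

theorem weisfeiler_bracket_le_general (g₀ : LieSubalgebra K L) :
    (∀ i j : ℕ, ∀ x ∈ weisfeiler g₀ i, ∀ y ∈ weisfeiler g₀ j,
        ⁅x, y⁆ ∈ weisfeiler g₀ (i + j)) ∧
    (∀ i : ℕ, weisfeiler g₀ i ≤ g₀.toSubmodule ∧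
        ∀ x ∈ g₀, ∀ y ∈ weisfeiler g₀ i, ⁅x, y⁆ ∈ weisfeiler g₀ i) :=
  ⟨fun i j _ hx _ hy => lie_mem_weisfeiler_add g₀ i j hx hy,
    fun i => ⟨weisfeiler_le g₀ i, fun _ hx _ hy => lie_mem_weisfeiler g₀ i hx hy⟩⟩

end

/-- `⁅𝔤_i, 𝔤_j⁆ ⊆ 𝔤_{i+j}`, and in particular each `𝔤_i` is an ideal of `𝔤₀`. -/
theorem weisfeiler_bracket_le
    {K : Type*} [Field K] [CharZero K]
    {L : Type*} [LieRing L] [LieAlgebra K L] [Module.Finite K L]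
    (g₀ : LieSubalgebra K L) :
    (∀ i j : ℕ, ∀ x ∈ weisfeiler g₀ i, ∀ y ∈ weisfeiler g₀ j,
        ⁅x, y⁆ ∈ weisfeiler g₀ (i + j)) ∧
    (∀ i : ℕ, weisfeiler g₀ i ≤ g₀.toSubmodule ∧
        ∀ x ∈ g₀, ∀ y ∈ weisfeiler g₀ i, ⁅x, y⁆ ∈ weisfeiler g₀ i) :=
  weisfeiler_bracket_le_general g₀
end
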